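/- arXiv:2401.02520 — 3 statements merged into one kernel-verified Lean document; each statement's English description precedes it below -/
import Mathlib

section
/- (Optimality of the separation lemma.) For every ε > 0 and every integer p ≥ 2, there exist two rank-one matrices P, Q ∈ ℝ^{p×p} with P ≠ Q, each of which can be written as a nonnegative scalar times an outer product x yᵀ of two unit vectors x, y ∈ ℝᵖ all of whose entries have absolute value at most √((1+ε)/p) (i.e., P and Q are (1+ε)-incoherent rank-one matrices), such that for Δ = P − Q one has ‖Δ‖_max² / ‖Δ‖_F² ≥ 1/(2p). -/
open Matrix
open scoped BigOperators RealInnerProductSpace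

noncomputable def frobNorm {m n : Type*} [Fintype m] [Fintype n] (M : Matrix m n ℝ) : ℝ :=
  Real.sqrt (∑ i, ∑ j, (M i j) ^ 2)

noncomputable def frobInner {m n : Type*} [Fintype m] [Fintype n] (A B : Matrix m n ℝ) : ℝ :=
  ∑ i, ∑ j, A i j * B i j

noncomputable def maxNorm {m n : Type*} [Fintype m] [Fintype n] (M : Matrix m n ℝ) : ℝ :=
  ⨆ i, ⨆ j, |M i j|

noncomputable def l0Norm {m n : Type*} (M : Matrix m n ℝ) : ℕ :=
  Set.ncard {ij : m × n | M ij.1 ij.2 ≠ 0}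

noncomputable def specNorm {p q : ℕ} (M : Matrix (Fin p) (Fin q) ℝ) : ℝ :=
  ‖LinearMap.toContinuousLinearMap (Matrix.toEuclideanLin M)‖

def Incoherent {p r : ℕ} (μ : ℝ) (U : Matrix (Fin p) (Fin r) ℝ) : Prop :=
  ∀ i, Real.sqrt (∑ j, (U i j) ^ 2) ≤ Real.sqrt (μ * r / p)

def SepProp (p r : ℕ) (μ c : ℝ) : Prop :=
  ∀ (U V L R : Matrix (Fin p) (Fin r) ℝ) (S Lam : Matrix (Fin r) (Fin r) ℝ),
    Uᵀ * U = 1 → Vᵀ * V = 1 → Lᵀ * L = 1 → Rᵀ * R = 1 →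
    Incoherent μ U → Incoherent μ V → Incoherent μ L → Incoherent μ R →
    S.IsDiag → (∀ i, 0 ≤ S i i) → Lam.IsDiag → (∀ i, 0 ≤ Lam i i) →
    maxNorm (U * S * Vᵀ - L * Lam * Rᵀ) ^ 2 ≤
      (c * μ * (r : ℝ) ^ 4 / p) * frobNorm (U * S * Vᵀ - L * Lam * Rᵀ) ^ 2

noncomputable def l1Norm {m n : Type*} [Fintype m] [Fintype n] (M : Matrix m n ℝ) : ℝ :=
  ∑ i, ∑ j, |M i j|

noncomputable def nuclearNorm {p q : ℕ} (M : Matrix (Fin p) (Fin q) ℝ) : ℝ :=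
  sSup {x : ℝ | ∃ X : Matrix (Fin p) (Fin q) ℝ, specNorm X ≤ 1 ∧ x = frobInner M X}

noncomputable def Phi {p : ℕ} (lam : ℝ) (Δ : Matrix (Fin p) (Fin p) ℝ) : ℝ :=
  sInf {x : ℝ | ∃ L S : Matrix (Fin p) (Fin p) ℝ, L + S = Δ ∧ x = nuclearNorm L + lam * l1Norm S}

theorem abs_apply_le_maxNorm {m n : Type*} [Fintype m] [Fintype n] (M : Matrix m n ℝ)
    (i : m) (j : n) : |M i j| ≤ maxNorm M :=
  (le_ciSup (f := fun j => |M i j|) (Set.finite_range _).bddAbove j).trans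
    (le_ciSup (f := fun i => ⨆ j, |M i j|) (Set.finite_range _).bddAbove i)

theorem frobNorm_sq {m n : Type*} [Fintype m] [Fintype n] (M : Matrix m n ℝ) :
    frobNorm M ^ 2 = ∑ i, ∑ j, (M i j) ^ 2 :=
  Real.sq_sqrt (Finset.sum_nonneg fun _ _ => Finset.sum_nonneg fun _ _ => sq_nonneg _)

/-- The all-ones vector with one coordinate replaced by `√(1 + ε)` has norm `√(p + ε)`. -/
theorem sum_sq_ite_sqrt_div {p : ℕ} {ε : ℝ} (hε : 0 < ε) (i₀ : Fin p) :
    ∑ i, ((if i = i₀ then √(1 + ε) else 1) / √(p + ε)) ^ 2 = 1 := by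
  have hN : (0 : ℝ) < p + ε := by positivity
  have hN_ne : (p : ℝ) + ε ≠ 0 := by positivity
  have h (i : Fin p) : ((if i = i₀ then √(1 + ε) else 1) / √(p + ε)) ^ 2
      = (1 + if i = i₀ then ε else 0) / (p + ε) := by
    rw [div_pow, Real.sq_sqrt hN.le]
    split_ifs
    · rw [Real.sq_sqrt (by positivity)]
    · norm_num
  simp_rw [h]
  rw [← Finset.sum_div, Finset.sum_add_distrib]
  simp [div_self hN_ne]

/-- optimality of the separation lemma — there exist two distinct
(1+ε)-incoherent rank-one matrices whose difference has
‖Δ‖_max²/‖Δ‖_F² ≥ 1/(2p). -/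
theorem stmt5 (ε : ℝ) (hε : 0 < ε) (p : ℕ) (hp : 2 ≤ p) :
    ∃ (P Q : Matrix (Fin p) (Fin p) ℝ) (σ₁ σ₂ : ℝ) (x₁ y₁ x₂ y₂ : Fin p → ℝ),
      P ≠ Q ∧ 0 ≤ σ₁ ∧ 0 ≤ σ₂ ∧
      (∑ i, (x₁ i) ^ 2) = 1 ∧ (∑ i, (y₁ i) ^ 2) = 1 ∧
      (∑ i, (x₂ i) ^ 2) = 1 ∧ (∑ i, (y₂ i) ^ 2) = 1 ∧
      (∀ i, |x₁ i| ≤ Real.sqrt ((1 + ε) / p)) ∧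
      (∀ i, |y₁ i| ≤ Real.sqrt ((1 + ε) / p)) ∧
      (∀ i, |x₂ i| ≤ Real.sqrt ((1 + ε) / p)) ∧
      (∀ i, |y₂ i| ≤ Real.sqrt ((1 + ε) / p)) ∧
      P = Matrix.of (fun i j => σ₁ * x₁ i * y₁ j) ∧
      Q = Matrix.of (fun i j => σ₂ * x₂ i * y₂ j) ∧
      1 / (2 * (p : ℝ)) ≤ maxNorm (P - Q) ^ 2 / frobNorm (P - Q) ^ 2 := by
  have hp0 : (0 : ℝ) < p := by positivity
  have hsp : 0 < √(p : ℝ) := Real.sqrt_pos.2 hp0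
  have hsp2 : √(p : ℝ) ^ 2 = p := Real.sq_sqrt hp0.le
  have hN : 0 < √(p + ε) := Real.sqrt_pos.2 (by positivity)
  have ht : 1 < √(1 + ε) := Real.lt_sqrt_of_sq_lt (by linarith)
  let i₀ : Fin p := ⟨0, by omega⟩
  let u : Fin p → ℝ := fun _ => 1 / √p
  let v : Fin p → ℝ := fun i => (if i = i₀ then √(1 + ε) else 1) / √(p + ε)
  have hu : ∑ i, (u i) ^ 2 = 1 := by
    simp [u, hsp2, hp0.ne']
  have hu_le (i : Fin p) : |u i| ≤ √((1 + ε) / p) := by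
    rw [Real.sqrt_div (by positivity), abs_of_pos (by positivity)]
    exact div_le_div_of_nonneg_right ht.le hsp.le
  have hv_le (i : Fin p) : |v i| ≤ √((1 + ε) / p) := by
    have hvi : 0 ≤ v i := by positivity
    rw [Real.sqrt_div (by positivity), abs_of_nonneg hvi]
    have hnum : (if i = i₀ then √(1 + ε) else 1) ≤ √(1 + ε) := by
      split_ifs
      · rfl
      · exact ht.le
    have hden : √(p : ℝ) ≤ √(p + ε) := Real.sqrt_le_sqrt (by linarith)
    exact div_le_div₀ (by positivity) hnum hsp hden
  set P : Matrix (Fin p) (Fin p) ℝ := Matrix.of fun i j => p * u i * u j with hP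
  set Q : Matrix (Fin p) (Fin p) ℝ :=
    Matrix.of fun i j => (√(p + ε) * √p) * v i * u j with hQ
  have hΔ (i j : Fin p) : (P - Q) i j = if i = i₀ then 1 - √(1 + ε) else 0 := by
    have hPij : P i j = 1 := by
      simp only [hP, u, Matrix.of_apply]
      field_simp
      exact hsp2.symm
    have hQij : Q i j = if i = i₀ then √(1 + ε) else 1 := by
      simp only [hQ, u, v, Matrix.of_apply]
      field_simp
    rw [Matrix.sub_apply, hPij, hQij]
    split_ifs <;> simp
  have hfrob : frobNorm (P - Q) ^ 2 = p * (1 - √(1 + ε)) ^ 2 := by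
    simp [frobNorm_sq, hΔ, ite_pow]
  have hmax : (1 - √(1 + ε)) ^ 2 ≤ maxNorm (P - Q) ^ 2 := by
    have h := abs_apply_le_maxNorm (P - Q) i₀ i₀
    rw [hΔ, if_pos rfl] at h
    rw [← sq_abs (1 - √(1 + ε))]
    gcongr
  have hne : 0 < (1 - √(1 + ε)) ^ 2 := by
    have : 1 - √(1 + ε) ≠ 0 := by linarith
    positivity
  refine ⟨P, Q, p, √(p + ε) * √p, u, u, v, u, ?_, hp0.le, by positivity, hu, hu,
    sum_sq_ite_sqrt_div hε i₀, hu, hu_le, hu_le, hv_le, hu_le, rfl, rfl, ?_⟩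
  · intro h
    have h₀ := hΔ i₀ i₀
    rw [h, sub_self, if_pos rfl, Matrix.zero_apply] at h₀
    linarith
  · rw [hfrob, div_le_div_iff₀ (by positivity) (by positivity)]
    nlinarith
end

section
/- (Norm discrepancy lemma.) Let p ≥ r ≥ 1 be integers and let F, G ∈ O_{p,r}. Denote by u = Fᵀe₁ ∈ ℝʳ and v = Gᵀe₁ ∈ ℝʳ the first rows of F and G. Then ‖FᵀG‖_F² ≤ r − (‖u‖ − ‖v‖)², where ‖u‖, ‖v‖ are Euclidean norms. -/
open Matrix
open scoped BigOperators RealInnerProductSpace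

/-- The square of the Frobenius norm as a trace. -/
theorem frobNorm_sq_eq_trace {m n : Type*} [Fintype m] [Fintype n] (M : Matrix m n ℝ) :
    frobNorm M ^ 2 = (Mᵀ * M).trace := by
  rw [frobNorm, Real.sq_sqrt (by positivity), Finset.sum_comm]
  simp [Matrix.trace, Matrix.mul_apply, sq]

theorem frobNorm_transpose {m n : Type*} [Fintype m] [Fintype n] (M : Matrix m n ℝ) :
    frobNorm Mᵀ = frobNorm M := by
  rw [frobNorm, frobNorm, Finset.sum_comm]
  rfl

/-- The transpose of a matrix with orthonormal columns is a contraction. -/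
theorem dotProduct_transpose_mulVec_le {m n : Type*} [Fintype m] [Fintype n] [DecidableEq n]
    {F : Matrix m n ℝ} (hF : Fᵀ * F = 1) (w : m → ℝ) :
    (Fᵀ *ᵥ w) ⬝ᵥ (Fᵀ *ᵥ w) ≤ w ⬝ᵥ w := by
  have hcross : w ⬝ᵥ (F *ᵥ (Fᵀ *ᵥ w)) = (Fᵀ *ᵥ w) ⬝ᵥ (Fᵀ *ᵥ w) := by
    rw [Matrix.dotProduct_mulVec, ← Matrix.mulVec_transpose]
  have hsquare : (F *ᵥ (Fᵀ *ᵥ w)) ⬝ᵥ (F *ᵥ (Fᵀ *ᵥ w)) = (Fᵀ *ᵥ w) ⬝ᵥ (Fᵀ *ᵥ w) := by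
    rw [Matrix.dotProduct_mulVec, ← Matrix.mulVec_transpose, Matrix.mulVec_mulVec, hF,
      Matrix.one_mulVec]
  have hnonneg : 0 ≤ (w - F *ᵥ (Fᵀ *ᵥ w)) ⬝ᵥ (w - F *ᵥ (Fᵀ *ᵥ w)) :=
    Finset.sum_nonneg fun i _ => mul_self_nonneg _
  rw [sub_dotProduct, dotProduct_sub, dotProduct_sub, dotProduct_comm (F *ᵥ _) w, hcross,
    hsquare] at hnonneg
  linarith

/-- The product `Fᵀ * G` of matrices with orthonormal columns is a contraction. -/
theorem dotProduct_transpose_mul_mulVec_le {m n : Type*} [Fintype m] [Fintype n] [DecidableEq n]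
    {F G : Matrix m n ℝ} (hF : Fᵀ * F = 1) (hG : Gᵀ * G = 1) (v : n → ℝ) :
    ((Fᵀ * G) *ᵥ v) ⬝ᵥ ((Fᵀ * G) *ᵥ v) ≤ v ⬝ᵥ v := by
  have h := dotProduct_transpose_mulVec_le hF (G *ᵥ v)
  rwa [Matrix.dotProduct_mulVec (G *ᵥ v), ← Matrix.mulVec_transpose, Matrix.mulVec_mulVec,
    Matrix.mulVec_mulVec, hG, Matrix.one_mulVec] at h

theorem norm_toLp_eq_sqrt {n : Type*} [Fintype n] (x : n → ℝ) :
    ‖WithLp.toLp 2 x‖ = Real.sqrt (∑ j, x j ^ 2) := by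
  simp [EuclideanSpace.norm_eq]

theorem norm_row_le_frobNorm {m n : Type*} [Fintype m] [Fintype n] (M : Matrix m n ℝ) (i : m) :
    ‖WithLp.toLp 2 (M i)‖ ≤ frobNorm M := by
  rw [norm_toLp_eq_sqrt]
  exact Real.sqrt_le_sqrt (Finset.single_le_sum (f := fun i => ∑ j, M i j ^ 2)
    (fun i _ => by positivity) (Finset.mem_univ i))

/-- The residual of `F` after projection onto the column space of `G`. -/
theorem frobNorm_sub_projection_sq {m n : Type*} [Fintype m] [Fintype n] [DecidableEq n]
    {F G : Matrix m n ℝ} (hF : Fᵀ * F = 1) (hG : Gᵀ * G = 1) :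
    frobNorm (F - G * (Gᵀ * F)) ^ 2 = Fintype.card n - frobNorm (Fᵀ * G) ^ 2 := by
  have hproj : (F - G * (Gᵀ * F))ᵀ * (F - G * (Gᵀ * F)) = 1 - (Gᵀ * F)ᵀ * (Gᵀ * F) := by
    have hcancel : (Gᵀ * F)ᵀ * Gᵀ * (G * (Gᵀ * F)) = (Gᵀ * F)ᵀ * (Gᵀ * F) := by
      rw [Matrix.mul_assoc, ← Matrix.mul_assoc Gᵀ, hG, Matrix.one_mul]
    have hcross : Fᵀ * (G * (Gᵀ * F)) = (Gᵀ * F)ᵀ * (Gᵀ * F) := by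
      simp [Matrix.mul_assoc]
    rw [Matrix.transpose_sub, Matrix.transpose_mul G, Matrix.sub_mul, Matrix.mul_sub,
      Matrix.mul_sub, hF, hcancel, hcross, Matrix.mul_assoc, sub_self, sub_zero]
  rw [frobNorm_sq_eq_trace, hproj, Matrix.trace_sub, Matrix.trace_one, ← frobNorm_sq_eq_trace,
    ← frobNorm_transpose (Gᵀ * F), Matrix.transpose_mul, Matrix.transpose_transpose]

theorem norm_row_sub_norm_row_le {m n : Type*} [Fintype m] [Fintype n] [DecidableEq n]
    {F G : Matrix m n ℝ} (hF : Fᵀ * F = 1) (hG : Gᵀ * G = 1) (i : m) :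
    ‖WithLp.toLp 2 (F i)‖ - ‖WithLp.toLp 2 (G i)‖ ≤ frobNorm (F - G * (Gᵀ * F)) := by
  have hrow : (F - G * (Gᵀ * F)) i = F i - (Fᵀ * G) *ᵥ G i := by
    rw [show Fᵀ * G = (Gᵀ * F)ᵀ by simp, Matrix.mulVec_transpose]
    rfl
  have hcontr : ‖WithLp.toLp 2 ((Fᵀ * G) *ᵥ G i)‖ ≤ ‖WithLp.toLp 2 (G i)‖ := by
    rw [norm_toLp_eq_sqrt, norm_toLp_eq_sqrt]
    refine Real.sqrt_le_sqrt ?_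
    simpa only [dotProduct, ← sq] using dotProduct_transpose_mul_mulVec_le hF hG (G i)
  have htri := norm_sub_norm_le (WithLp.toLp 2 (F i)) (WithLp.toLp 2 ((Fᵀ * G) *ᵥ G i))
  have hle := norm_row_le_frobNorm (F - G * (Gᵀ * F)) i
  rw [hrow, WithLp.toLp_sub] at hle
  linarith

/-- norm discrepancy lemma — for F, G with orthonormal columns,
‖FᵀG‖_F² ≤ r − (‖u‖ − ‖v‖)², where u, v are the first rows of F and G. -/
theorem stmt6 (p r : ℕ) (hr : 0 < r) (hrp : r ≤ p)
    (F G : Matrix (Fin p) (Fin r) ℝ)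
    (hF : Fᵀ * F = 1) (hG : Gᵀ * G = 1) :
    frobNorm (Fᵀ * G) ^ 2 ≤
      (r : ℝ) -
        (Real.sqrt (∑ j, (F ⟨0, lt_of_lt_of_le hr hrp⟩ j) ^ 2) -
          Real.sqrt (∑ j, (G ⟨0, lt_of_lt_of_le hr hrp⟩ j) ^ 2)) ^ 2 := by
  rw [← norm_toLp_eq_sqrt, ← norm_toLp_eq_sqrt]
  have hFG := norm_row_sub_norm_row_le hF hG ⟨0, lt_of_lt_of_le hr hrp⟩
  have hGF := norm_row_sub_norm_row_le hG hF ⟨0, lt_of_lt_of_le hr hrp⟩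
  have hresF := frobNorm_sub_projection_sq hF hG
  have hresG := frobNorm_sub_projection_sq hG hF
  have hsymm : frobNorm (Gᵀ * F) = frobNorm (Fᵀ * G) := by
    rw [← frobNorm_transpose, Matrix.transpose_mul, Matrix.transpose_transpose]
  rw [Fintype.card_fin] at hresF hresG
  rw [hsymm, ← hresF] at hresG
  have heq := (sq_eq_sq₀ (Real.sqrt_nonneg _) (Real.sqrt_nonneg _)).mp hresG
  change frobNorm _ = frobNorm _ at heq
  rw [heq] at hGF
  have hsq := sq_le_sq' (by linarith) hFG
  linarith
end

section
/- There exists a universal constant c > 0 such that the following holds. Let p > r ≥ 1 be integers and μ > 0 with μ r ≤ p/8. Let U, V, L, R ∈ O_{p,r} all be μ-incoherent, and denote by u = Uᵀe₁, v = Vᵀe₁, l = Lᵀe₁, ρ = Rᵀe₁ ∈ ℝʳ their first rows. Then r − ⟨UᵀL, VᵀR⟩ ≥ c·(p/(μ r³))·(uᵀv − lᵀρ)², where ⟨A,B⟩ = Tr(A Bᵀ) is the Frobenius inner product. -/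
open Matrix
open scoped BigOperators RealInnerProductSpace

/-- Cauchy–Schwarz for the bilinear form of `D`, with the Frobenius norm of `D`. -/
lemma sq_dotProduct_mulVec_le {m n : Type*} [Fintype m] [Fintype n] (D : Matrix m n ℝ)
    (x : m → ℝ) (y : n → ℝ) :
    (x ⬝ᵥ D *ᵥ y) ^ 2 ≤ (x ⬝ᵥ x) * (y ⬝ᵥ y) * frobInner D D := by
  have key : ∑ i, (D *ᵥ y) i ^ 2 ≤ (y ⬝ᵥ y) * frobInner D D := by
    rw [frobInner, Finset.mul_sum]
    refine Finset.sum_le_sum fun i _ => ?_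
    have := Finset.sum_mul_sq_le_sq_mul_sq Finset.univ (D i) y
    simp only [mulVec, dotProduct, ← sq]
    linarith
  have h := Finset.sum_mul_sq_le_sq_mul_sq Finset.univ x (D *ᵥ y)
  have hx : x ⬝ᵥ x = ∑ i, x i ^ 2 := by simp only [dotProduct, sq]
  calc (x ⬝ᵥ D *ᵥ y) ^ 2 ≤ (∑ i, x i ^ 2) * ∑ i, (D *ᵥ y) i ^ 2 := h
    _ ≤ (∑ i, x i ^ 2) * ((y ⬝ᵥ y) * frobInner D D) := by gcongr
    _ = _ := by rw [hx, mul_assoc]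

lemma frobInner_eq_trace {m n : Type*} [Fintype m] [Fintype n] (A B : Matrix m n ℝ) :
    frobInner A B = (A * Bᵀ).trace := by
  simp [frobInner, trace, Matrix.mul_apply]

lemma frobInner_transpose_mul {m n : Type*} [Fintype m] [Fintype n] (U V L R : Matrix m n ℝ) :
    frobInner (Uᵀ * L) (Vᵀ * R) = frobInner (U * Vᵀ) (L * Rᵀ) := by
  simp only [frobInner_eq_trace, transpose_mul, transpose_transpose]
  rw [← trace_transpose]
  simp only [transpose_mul, transpose_transpose]
  rw [← Matrix.mul_assoc, trace_mul_comm]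
  simp only [Matrix.mul_assoc]

lemma dotProduct_self_nonneg_real {m : Type*} [Fintype m] (x : m → ℝ) : 0 ≤ x ⬝ᵥ x :=
  Finset.sum_nonneg fun i _ => mul_self_nonneg (x i)

lemma dotProduct_sub_self_le {m : Type*} [Fintype m] (x y : m → ℝ) :
    (x - y) ⬝ᵥ (x - y) ≤ 2 * (x ⬝ᵥ x) + 2 * (y ⬝ᵥ y) := by
  have h := dotProduct_self_nonneg_real (x + y)
  have hc := dotProduct_comm x y
  simp only [sub_dotProduct, dotProduct_sub, add_dotProduct, dotProduct_add] at h ⊢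
  linarith

section Projection

variable {m n : Type*} [Fintype m] [Fintype n] [DecidableEq n] {U : Matrix m n ℝ}

lemma dotProduct_proj_self (hU : Uᵀ * U = 1) (x : m → ℝ) :
    ((U * Uᵀ) *ᵥ x) ⬝ᵥ ((U * Uᵀ) *ᵥ x) = x ⬝ᵥ (U * Uᵀ) *ᵥ x := by
  have hP : (U * Uᵀ)ᵀ * (U * Uᵀ) = U * Uᵀ := by
    rw [transpose_mul, transpose_transpose, Matrix.mul_assoc, ← Matrix.mul_assoc Uᵀ, hU,
      Matrix.one_mul]
  rw [dotProduct_comm, dotProduct_mulVec, ← mulVec_transpose, mulVec_mulVec, hP, dotProduct_comm]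

lemma dotProduct_sub_proj_self (hU : Uᵀ * U = 1) (x : m → ℝ) :
    (x - (U * Uᵀ) *ᵥ x) ⬝ᵥ (x - (U * Uᵀ) *ᵥ x) =
      x ⬝ᵥ x - ((U * Uᵀ) *ᵥ x) ⬝ᵥ ((U * Uᵀ) *ᵥ x) := by
  have h := dotProduct_proj_self hU x
  have hc := dotProduct_comm x ((U * Uᵀ) *ᵥ x)
  simp only [sub_dotProduct, dotProduct_sub]
  linarith

lemma dotProduct_sub_proj_self_le (hU : Uᵀ * U = 1) (x : m → ℝ) :
    (x - (U * Uᵀ) *ᵥ x) ⬝ᵥ (x - (U * Uᵀ) *ᵥ x) ≤ x ⬝ᵥ x := by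
  have := dotProduct_self_nonneg_real ((U * Uᵀ) *ᵥ x)
  rw [dotProduct_sub_proj_self hU]
  linarith

lemma dotProduct_proj_self_le (hU : Uᵀ * U = 1) (x : m → ℝ) :
    ((U * Uᵀ) *ᵥ x) ⬝ᵥ ((U * Uᵀ) *ᵥ x) ≤ x ⬝ᵥ x := by
  have := dotProduct_self_nonneg_real (x - (U * Uᵀ) *ᵥ x)
  rw [dotProduct_sub_proj_self hU] at this
  linarith

lemma dotProduct_proj_single [DecidableEq m] (hU : Uᵀ * U = 1) (i : m) :
    ((U * Uᵀ) *ᵥ Pi.single i 1) ⬝ᵥ ((U * Uᵀ) *ᵥ Pi.single i 1) = ∑ j, U i j ^ 2 := by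
  rw [dotProduct_proj_self hU, single_one_dotProduct, mulVec_single_one]
  simp [Matrix.mul_apply, sq]

variable {V L R : Matrix m n ℝ}

/-- Splitting of the bilinear form of `U * Vᵀ - L * Rᵀ` in which every term has one argument
in the range of `U`, `V` or `L`. -/
lemma dotProduct_mulVec_split (hV : Vᵀ * V = 1) (hL : Lᵀ * L = 1)
    (x y : m → ℝ) :
    x ⬝ᵥ (U * Vᵀ - L * Rᵀ) *ᵥ y =
      ((U * Uᵀ) *ᵥ x) ⬝ᵥ (U * Vᵀ - L * Rᵀ) *ᵥ y +
      (x - (U * Uᵀ) *ᵥ x) ⬝ᵥ (U * Vᵀ - L * Rᵀ) *ᵥ ((V * Vᵀ) *ᵥ y) +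
      ((L * Lᵀ) *ᵥ (x - (U * Uᵀ) *ᵥ x)) ⬝ᵥ
        (U * Vᵀ - L * Rᵀ) *ᵥ (y - (V * Vᵀ) *ᵥ y) := by
  set z := x - (U * Uᵀ) *ᵥ x with hz
  set w := y - (V * Vᵀ) *ᵥ y with hw
  have hVw : (U * Vᵀ) *ᵥ w = 0 := by
    rw [hw, mulVec_sub, mulVec_mulVec, Matrix.mul_assoc, ← Matrix.mul_assoc Vᵀ, hV,
      Matrix.one_mul, sub_self]
  have hLw : (L * Lᵀ) *ᵥ ((L * Rᵀ) *ᵥ w) = (L * Rᵀ) *ᵥ w := by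
    rw [mulVec_mulVec, Matrix.mul_assoc, ← Matrix.mul_assoc Lᵀ, hL, Matrix.one_mul]
  have hsymm : ∀ a : m → ℝ, ((L * Lᵀ) *ᵥ z) ⬝ᵥ a = z ⬝ᵥ (L * Lᵀ) *ᵥ a := fun a => by
    rw [dotProduct_mulVec, ← mulVec_transpose, transpose_mul, transpose_transpose]
  have hlast : ((L * Lᵀ) *ᵥ z) ⬝ᵥ (U * Vᵀ - L * Rᵀ) *ᵥ w = z ⬝ᵥ (U * Vᵀ - L * Rᵀ) *ᵥ w := by
    rw [hsymm, sub_mulVec, hVw, zero_sub, mulVec_neg, hLw]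
  rw [hlast, hw, mulVec_sub, dotProduct_sub, hz, sub_dotProduct, sub_dotProduct]
  ring

lemma frobInner_mul_transpose_self (hU : Uᵀ * U = 1) (hV : Vᵀ * V = 1) :
    frobInner (U * Vᵀ) (U * Vᵀ) = Fintype.card n := by
  rw [frobInner_eq_trace, transpose_mul, transpose_transpose, Matrix.mul_assoc,
    ← Matrix.mul_assoc Vᵀ, hV, Matrix.one_mul, trace_mul_comm, hU, trace_one]

lemma frobInner_sub_self (hU : Uᵀ * U = 1) (hV : Vᵀ * V = 1) (hL : Lᵀ * L = 1)
    (hR : Rᵀ * R = 1) :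
    frobInner (U * Vᵀ - L * Rᵀ) (U * Vᵀ - L * Rᵀ) =
      2 * (Fintype.card n - frobInner (Uᵀ * L) (Vᵀ * R)) := by
  have expand : ∀ A B : Matrix m m ℝ, frobInner (A - B) (A - B) =
      frobInner A A + frobInner B B - 2 * frobInner A B := fun A B => by
    simp only [frobInner, Matrix.sub_apply, Finset.mul_sum, ← Finset.sum_add_distrib,
      ← Finset.sum_sub_distrib]
    exact Finset.sum_congr rfl fun i _ => Finset.sum_congr rfl fun j _ => by ring
  rw [expand, frobInner_mul_transpose_self hU hV, frobInner_mul_transpose_self hL hR,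
    frobInner_transpose_mul]
  ring

/-- A diagonal entry of `U * Vᵀ - L * Rᵀ` is controlled by its Frobenius norm and the sizes of the
corresponding rows. -/
lemma sq_diag_entry_le [DecidableEq m] (hU : Uᵀ * U = 1) (hV : Vᵀ * V = 1) (hL : Lᵀ * L = 1)
    {κ : ℝ} {i : m} (hUi : ∑ j, U i j ^ 2 ≤ κ) (hVi : ∑ j, V i j ^ 2 ≤ κ)
    (hLi : ∑ j, L i j ^ 2 ≤ κ) :
    ((U * Vᵀ - L * Rᵀ) i i) ^ 2 ≤ 18 * κ * frobInner (U * Vᵀ - L * Rᵀ) (U * Vᵀ - L * Rᵀ) := by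
  set D := U * Vᵀ - L * Rᵀ with hD
  set e : m → ℝ := Pi.single i 1 with he
  have hF : 0 ≤ frobInner D D :=
    Finset.sum_nonneg fun _ _ => Finset.sum_nonneg fun _ _ => mul_self_nonneg _
  have hκ : 0 ≤ κ := (Finset.sum_nonneg fun j _ => sq_nonneg (U i j)).trans hUi
  have hee : e ⬝ᵥ e = 1 := by simp [he]
  have hDe : D i i = e ⬝ᵥ D *ᵥ e := by
    rw [he, single_one_dotProduct, mulVec_single_one, col_apply]
  have hPU : ((U * Uᵀ) *ᵥ e) ⬝ᵥ ((U * Uᵀ) *ᵥ e) ≤ κ := (dotProduct_proj_single hU i).trans_le hUi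
  have hPV : ((V * Vᵀ) *ᵥ e) ⬝ᵥ ((V * Vᵀ) *ᵥ e) ≤ κ := (dotProduct_proj_single hV i).trans_le hVi
  have hPL : ((L * Lᵀ) *ᵥ e) ⬝ᵥ ((L * Lᵀ) *ᵥ e) ≤ κ := (dotProduct_proj_single hL i).trans_le hLi
  have hQU := (dotProduct_sub_proj_self_le hU e).trans_eq hee
  have hQV := (dotProduct_sub_proj_self_le hV e).trans_eq hee
  have hLQU : ((L * Lᵀ) *ᵥ (e - (U * Uᵀ) *ᵥ e)) ⬝ᵥ ((L * Lᵀ) *ᵥ (e - (U * Uᵀ) *ᵥ e)) ≤ 4 * κ := by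
    rw [mulVec_sub]
    have h₁ := dotProduct_sub_self_le ((L * Lᵀ) *ᵥ e) ((L * Lᵀ) *ᵥ ((U * Uᵀ) *ᵥ e))
    have h₂ := dotProduct_proj_self_le hL ((U * Uᵀ) *ᵥ e)
    linarith
  have bound : ∀ {a b : ℝ} {x y : m → ℝ}, x ⬝ᵥ x ≤ a → y ⬝ᵥ y ≤ b →
      (x ⬝ᵥ D *ᵥ y) ^ 2 ≤ a * b * frobInner D D := fun {a b x y} hx hy =>
    (sq_dotProduct_mulVec_le D x y).trans <| mul_le_mul_of_nonneg_right
      (mul_le_mul hx hy (dotProduct_self_nonneg_real y)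
        ((dotProduct_self_nonneg_real x).trans hx)) hF
  have b₁ := bound hPU hee.le
  have b₂ := bound hQU hPV
  have b₃ := bound hLQU hQV
  rw [hDe, hD, dotProduct_mulVec_split hV hL, ← hD]
  set s := ((U * Uᵀ) *ᵥ e) ⬝ᵥ D *ᵥ e
  set t := (e - (U * Uᵀ) *ᵥ e) ⬝ᵥ D *ᵥ ((V * Vᵀ) *ᵥ e)
  set q := ((L * Lᵀ) *ᵥ (e - (U * Uᵀ) *ᵥ e)) ⬝ᵥ D *ᵥ (e - (V * Vᵀ) *ᵥ e)
  linarith [sq_nonneg (s - t), sq_nonneg (s - q), sq_nonneg (t - q)]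

end Projection

lemma Incoherent.sum_sq_le {p r : ℕ} {μ : ℝ} (hμ : 0 ≤ μ) {U : Matrix (Fin p) (Fin r) ℝ}
    (hU : Incoherent μ U) (i : Fin p) : ∑ j, U i j ^ 2 ≤ μ * r / p :=
  (Real.sqrt_le_sqrt_iff (by positivity)).1 (hU i)

/-- there is a universal constant c > 0 with
r − ⟨UᵀL, VᵀR⟩ ≥ c·(p/(μr³))·(uᵀv − lᵀρ)² for μ-incoherent U, V, L, R,
where u, v, l, ρ are the first rows. -/
theorem stmt9 :
    ∃ c : ℝ, 0 < c ∧
      ∀ (p r : ℕ) (hr : 0 < r) (hrp : r < p)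
        (μ : ℝ), 0 < μ → μ * (r : ℝ) ≤ (p : ℝ) / 8 →
        ∀ (U V L R : Matrix (Fin p) (Fin r) ℝ),
          Uᵀ * U = 1 → Vᵀ * V = 1 → Lᵀ * L = 1 → Rᵀ * R = 1 →
          Incoherent μ U → Incoherent μ V → Incoherent μ L → Incoherent μ R →
          (r : ℝ) - frobInner (Uᵀ * L) (Vᵀ * R) ≥
            c * ((p : ℝ) / (μ * (r : ℝ) ^ 3)) *
              ((∑ j, U ⟨0, hr.trans hrp⟩ j * V ⟨0, hr.trans hrp⟩ j) -
                (∑ j, L ⟨0, hr.trans hrp⟩ j * R ⟨0, hr.trans hrp⟩ j)) ^ 2 := by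
  refine ⟨1 / 36, by norm_num, ?_⟩
  intro p r hr hrp μ hμ _ U V L R hU hV hL hR iU iV iL _
  set i : Fin p := ⟨0, hr.trans hrp⟩
  have hentry : (∑ j, U i j * V i j) - (∑ j, L i j * R i j) = (U * Vᵀ - L * Rᵀ) i i := by
    simp [Matrix.mul_apply]
  have key := sq_diag_entry_le (R := R) hU hV hL (iU.sum_sq_le hμ.le i) (iV.sum_sq_le hμ.le i)
    (iL.sum_sq_le hμ.le i)
  have hF : 0 ≤ frobInner (U * Vᵀ - L * Rᵀ) (U * Vᵀ - L * Rᵀ) :=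
    Finset.sum_nonneg fun _ _ => Finset.sum_nonneg fun _ _ => mul_self_nonneg _
  rw [frobInner_sub_self hU hV hL hR, Fintype.card_fin] at key hF
  rw [hentry, ge_iff_le]
  set G := (r : ℝ) - frobInner (Uᵀ * L) (Vᵀ * R)
  have hr1 : (1 : ℝ) ≤ r := by exact_mod_cast hr
  have hr0 : (0 : ℝ) < r := by linarith
  have hp0 : (0 : ℝ) < p := by exact_mod_cast hr.trans hrp
  have hG : 0 ≤ G := by linarith
  calc 1 / 36 * ((p : ℝ) / (μ * (r : ℝ) ^ 3)) * ((U * Vᵀ - L * Rᵀ) i i) ^ 2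
      ≤ 1 / 36 * ((p : ℝ) / (μ * (r : ℝ) ^ 3)) * (18 * (μ * r / p) * (2 * G)) := by gcongr
    _ = G / (r : ℝ) ^ 2 := by field_simp; norm_num
    _ ≤ G := div_le_self hG (one_le_pow₀ hr1)
end
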